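/- Let f be a strictly convex continuous function on a compact interval [a,b], let 𝓗 and 𝓚 be complex Hilbert spaces, let φ : B(𝓗) → B(𝓚) be a unital completely positive linear map, and let H be a self-adjoint bounded operator on 𝓗 with σ(H) ⊆ [a,b]. If φ(f(H)) = f(φ(H)), then the restriction of φ to the algebra of polynomials in H is multiplicative; that is, φ(p(H) q(H)) = φ(p(H)) φ(q(H)) for all polynomials p and q. -/

import Mathlib

set_option synthInstance.maxHeartbeats 400000
set_option maxHeartbeats 800000

open Polynomial Matrix

/-!
For `x` in the interior of `[a, b]` and a subgradient `s` of `f` at `x`, the gap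
`h t = f t - f x - s * (t - x)` is `f` plus an affine function, so `φ (h H) = h (φ H)`. If `g ≥ 0`
is continuous and vanishes near `x`, strict convexity gives `g ≤ κ h` with `κ` independent of `x`.
Compressing `φ (g H) ≤ κ h (φ H)` to the part of `φ H` with spectrum in the grid cell around `x`
costs at most `κ` times a second difference of `f`. These second differences telescope, and their
sum tends to `0` with the mesh. Hence `φ (g H)` vanishes on the spectral parts of `φ H` away from
the support of `g`.

Consequently, on a cell of radius `δ` the variance `φ (H²) - φ(H)²` is at most `4 δ²`. Summing over
`O(1/δ)` cells bounds it by a multiple of `δ`, so `φ (H²) ≤ φ(H)²`. With Kadison's inequality this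
is an equality, and polarizing Kadison's inequality at `r H + y` then gives
`φ (H y + y H) = φ H φ y + φ y φ H`, hence `φ (Hⁿ) = φ(H)ⁿ`.
-/

open Set Filter Topology

section RealConvexity

variable {S : Set ℝ} {f : ℝ → ℝ} {x s t δ r : ℝ}

/-- The height `f t - f x - s * (t - x)` of the graph of `f` above the line of slope `s` through
`(x, f x)`. The slope `s` is a subgradient of `f` on `S` at `x` when this is nonnegative on `S`. -/
def tangentGap (f : ℝ → ℝ) (x s t : ℝ) : ℝ := f t - f x - s * (t - x)

/-- The symmetric second difference of `f` at `x` with step `δ`. -/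
def secondDiff (f : ℝ → ℝ) (δ x : ℝ) : ℝ := f (x + δ) - 2 * f x + f (x - δ)

lemma exists_forall_tangentGap_nonneg (hf : ConvexOn ℝ S f) (hx : x ∈ interior S) :
    ∃ s, ∀ t ∈ S, 0 ≤ tangentGap f x s t := by
  refine ⟨derivWithin f (Ioi x) x, fun t ht => ?_⟩
  unfold tangentGap
  rcases lt_trichotomy t x with htx | rfl | hxt
  · have hslope := (hf.slope_le_leftDeriv_of_mem_interior ht hx htx).trans
      (hf.leftDeriv_le_rightDeriv_of_mem_interior hx)
    rw [slope_def_field, div_le_iff₀ (sub_pos.mpr htx)] at hslope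
    linarith
  · simp
  · have hslope := hf.rightDeriv_le_slope_of_mem_interior hx ht hxt
    rw [slope_def_field, le_div_iff₀ (sub_pos.mpr hxt)] at hslope
    linarith

lemma continuousOn_tangentGap (hf : ContinuousOn f S) (x s : ℝ) :
    ContinuousOn (tangentGap f x s) S := by
  unfold tangentGap
  fun_prop

lemma convexOn_tangentGap (hf : ConvexOn ℝ S f) (x s : ℝ) : ConvexOn ℝ S (tangentGap f x s) := by
  refine ⟨hf.1, fun y hy z hz α β hα hβ hαβ => ?_⟩
  have hconv := hf.2 hy hz hα hβ hαβ
  simp only [tangentGap, smul_eq_mul] at hconv ⊢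
  linear_combination hconv + (f x - s * x) * hαβ

lemma tangentGap_le_secondDiff (hf : ConvexOn ℝ S f) (hl : x - δ ∈ S) (hr : x + δ ∈ S)
    (hs : ∀ t ∈ S, 0 ≤ tangentGap f x s t) (ht : |t - x| ≤ δ) :
    tangentGap f x s t ≤ secondDiff f δ x := by
  have ht' : t ∈ Icc (x - δ) (x + δ) := by
    rw [abs_le] at ht
    constructor <;> linarith
  calc tangentGap f x s t
      ≤ max (tangentGap f x s (x - δ)) (tangentGap f x s (x + δ)) :=
        (convexOn_tangentGap hf x s).le_max_of_mem_Icc hl hr ht'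
    _ ≤ tangentGap f x s (x - δ) + tangentGap f x s (x + δ) :=
        max_le_add_of_nonneg (hs _ hl) (hs _ hr)
    _ = secondDiff f δ x := by unfold tangentGap secondDiff; ring

lemma two_mul_midpoint_lt (hf : StrictConvexOn ℝ S f) (hx : x ∈ S) (ht : t ∈ S) (hxt : x ≠ t) :
    2 * f ((x + t) / 2) < f x + f t := by
  have hconv := hf.2 hx ht hxt one_half_pos one_half_pos (add_halves 1)
  simp only [smul_eq_mul] at hconv
  rw [show 1 / 2 * x + 1 / 2 * t = (x + t) / 2 by ring] at hconv
  linarith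

lemma secondDiff_pos (hf : StrictConvexOn ℝ S f) (hl : x - δ ∈ S) (hr : x + δ ∈ S) (hδ : 0 < δ) :
    0 < secondDiff f δ x := by
  have hconv := two_mul_midpoint_lt hf hl hr (by linarith)
  rw [show (x - δ + (x + δ)) / 2 = x by ring] at hconv
  unfold secondDiff
  linarith

-- Twice the midpoint convexity defect of `(x, t)` bounds `tangentGap f x s t` from below for every
-- subgradient `s`, and does not involve `s`; compactness makes it uniformly positive.
lemma exists_pos_forall_le_tangentGap (hf : StrictConvexOn ℝ S f) (hS : IsCompact S)
    (hfc : ContinuousOn f S) (hr : 0 < r) :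
    ∃ m > 0, ∀ x ∈ S, ∀ s, (∀ t ∈ S, 0 ≤ tangentGap f x s t) →
      ∀ t ∈ S, r ≤ |t - x| → m ≤ tangentGap f x s t := by
  let Z : Set (ℝ × ℝ) := (S ×ˢ S) ∩ {p | r ≤ |p.2 - p.1|}
  let defect : ℝ × ℝ → ℝ := fun p => f p.1 + f p.2 - 2 * f ((p.1 + p.2) / 2)
  have hZ : IsCompact Z := (hS.prod hS).inter_right (isClosed_le continuous_const (by fun_prop))
  have hmid : ∀ x ∈ S, ∀ t ∈ S, (x + t) / 2 ∈ S := fun x hx t ht => by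
    convert hf.1 hx ht one_half_pos.le one_half_pos.le (add_halves 1) using 1
    simp only [smul_eq_mul]
    ring
  have hcont : ContinuousOn defect Z :=
    ((hfc.comp (by fun_prop) fun p hp => hp.1.1).add
      (hfc.comp (by fun_prop) fun p hp => hp.1.2)).sub
      (continuousOn_const.mul (hfc.comp (by fun_prop) fun p hp => hmid _ hp.1.1 _ hp.1.2))
  have hpos : ∀ p ∈ Z, 0 < defect p := by
    rintro ⟨x, t⟩ ⟨⟨hx, ht⟩, hxt : r ≤ |t - x|⟩
    have hne : x ≠ t := by
      rintro rfl
      rw [sub_self, abs_zero] at hxt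
      linarith
    exact sub_pos.mpr (two_mul_midpoint_lt hf hx ht hne)
  obtain ⟨m, hm, hmZ⟩ := hZ.exists_forall_le' hcont hpos
  refine ⟨m, hm, fun x hx s hs t ht hxt => ?_⟩
  have hdefect : m ≤ f x + f t - 2 * f ((x + t) / 2) := hmZ (x, t) ⟨⟨hx, ht⟩, hxt⟩
  have hgap := hs _ (hmid x hx t ht)
  unfold tangentGap at hgap ⊢
  linarith

lemma exists_pos_le_mul_tangentGap (hf : StrictConvexOn ℝ S f) (hS : IsCompact S)
    (hfc : ContinuousOn f S) {g : ℝ → ℝ} (hg : ContinuousOn g S) (hr : 0 < r) :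
    ∃ κ > 0, ∀ x ∈ S, ∀ s, (∀ t ∈ S, 0 ≤ tangentGap f x s t) →
      (∀ t ∈ S, g t ≠ 0 → r ≤ |t - x|) → ∀ t ∈ S, g t ≤ κ * tangentGap f x s t := by
  obtain ⟨m, hm, hmr⟩ := exists_pos_forall_le_tangentGap hf hS hfc hr
  obtain ⟨C, hC⟩ := hS.exists_bound_of_continuousOn hg
  have hκ : 0 < max 1 C / m := div_pos (lt_max_of_lt_left one_pos) hm
  refine ⟨max 1 C / m, hκ, fun x hx s hs hfar t ht => ?_⟩
  rcases eq_or_ne (g t) 0 with hgt | hgt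
  · rw [hgt]
    exact mul_nonneg hκ.le (hs t ht)
  · calc g t ≤ max 1 C := (le_abs_self _).trans ((hC t ht).trans (le_max_right _ _))
      _ = max 1 C / m * m := (div_mul_cancel₀ _ hm.ne').symm
      _ ≤ max 1 C / m * tangentGap f x s t :=
        mul_le_mul_of_nonneg_left (hmr x hx s hs t ht (hfar t ht hgt)) hκ.le

end RealConvexity

section UniformGrid

variable {a b : ℝ} {M k : ℕ}

/-- The mesh of the subdivision of `[a, b]` into `M + 1` intervals of equal length. -/
noncomputable def gridStep (a b : ℝ) (M : ℕ) : ℝ := (b - a) / (M + 1)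

/-- The points of the subdivision of `[a, b]` into `M + 1` intervals of equal length. The endpoints
are those with index `0` and `M + 1`, so the interior points are `gridPoint a b M (k + 1)` for
`k < M`. -/
noncomputable def gridPoint (a b : ℝ) (M k : ℕ) : ℝ := a + k * gridStep a b M

lemma gridStep_pos (hab : a < b) : 0 < gridStep a b M :=
  div_pos (sub_pos.mpr hab) (by positivity)

lemma gridPoint_zero : gridPoint a b M 0 = a := by simp [gridPoint]

lemma gridPoint_succ : gridPoint a b M (k + 1) = gridPoint a b M k + gridStep a b M := by
  unfold gridPoint
  push_cast
  ring

lemma gridPoint_last : gridPoint a b M (M + 1) = b := by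
  unfold gridPoint gridStep
  push_cast
  field_simp
  ring

lemma gridPoint_mem_Icc (hab : a < b) (hk : k ≤ M + 1) : gridPoint a b M k ∈ Icc a b := by
  have hmono : Monotone (gridPoint a b M) :=
    monotone_nat_of_le_succ fun k => by simp [gridPoint_succ, (gridStep_pos hab).le]
  exact ⟨by simpa only [gridPoint_zero] using hmono k.zero_le,
    by simpa only [gridPoint_last] using hmono hk⟩

lemma gridPoint_succ_sub_mem_Icc (hab : a < b) (hk : k < M) :
    gridPoint a b M (k + 1) - gridStep a b M ∈ Icc a b := by
  simpa [gridPoint_succ] using gridPoint_mem_Icc hab (by lia : k ≤ M + 1)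

lemma gridPoint_succ_add_mem_Icc (hab : a < b) (hk : k < M) :
    gridPoint a b M (k + 1) + gridStep a b M ∈ Icc a b := by
  simpa only [gridPoint_succ] using gridPoint_mem_Icc hab (by lia : k + 2 ≤ M + 1)

lemma gridPoint_succ_mem_Ioo (hab : a < b) (hk : k < M) : gridPoint a b M (k + 1) ∈ Ioo a b := by
  have hδ := gridStep_pos (M := M) hab
  constructor
  · linarith [(gridPoint_succ_sub_mem_Icc hab hk).1]
  · linarith [(gridPoint_succ_add_mem_Icc hab hk).2]

lemma tendsto_gridStep (a b : ℝ) : Tendsto (gridStep a b) atTop (𝓝 0) := by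
  have h := (tendsto_one_div_add_atTop_nhds_zero_nat (𝕜 := ℝ)).const_mul (b - a)
  simp only [mul_zero, mul_one_div] at h
  exact h

lemma sum_secondDiff_gridPoint (f : ℝ → ℝ) :
    ∑ k ∈ Finset.range M, secondDiff f (gridStep a b M) (gridPoint a b M (k + 1)) =
      (f b - f (b - gridStep a b M)) - (f (a + gridStep a b M) - f a) := by
  have hterm : ∀ k, secondDiff f (gridStep a b M) (gridPoint a b M (k + 1)) =
      (f (gridPoint a b M (k + 1 + 1)) - f (gridPoint a b M (k + 1))) -
        (f (gridPoint a b M (k + 1)) - f (gridPoint a b M k)) := fun k => by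
    simp only [secondDiff, gridPoint_succ, add_sub_cancel_right]
    ring
  have hlast : gridPoint a b M M = b - gridStep a b M := by
    rw [eq_sub_iff_add_eq, ← gridPoint_succ, gridPoint_last]
  simp only [hterm]
  rw [Finset.sum_range_sub fun k => f (gridPoint a b M (k + 1)) - f (gridPoint a b M k),
    gridPoint_last, hlast, gridPoint_succ, gridPoint_zero]

lemma tendsto_sum_secondDiff {f : ℝ → ℝ} (hab : a < b) (hf : ContinuousOn f (Icc a b)) :
    Tendsto (fun M => ∑ k ∈ Finset.range M,
      secondDiff f (gridStep a b M) (gridPoint a b M (k + 1))) atTop (𝓝 0) := by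
  have hsmall : ∀ᶠ M in atTop, gridStep a b M ≤ b - a :=
    (tendsto_gridStep a b).eventually_le_const (sub_pos.mpr hab)
  have hright : Tendsto (fun M => f (b - gridStep a b M)) atTop (𝓝 (f b)) := by
    refine (hf b ⟨hab.le, le_rfl⟩).tendsto.comp (tendsto_nhdsWithin_iff.mpr ⟨?_, ?_⟩)
    · simpa using (tendsto_gridStep a b).const_sub b
    · filter_upwards [hsmall] with M hM
      constructor <;> linarith [gridStep_pos (M := M) hab]
  have hleft : Tendsto (fun M => f (a + gridStep a b M)) atTop (𝓝 (f a)) := by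
    refine (hf a ⟨le_rfl, hab.le⟩).tendsto.comp (tendsto_nhdsWithin_iff.mpr ⟨?_, ?_⟩)
    · simpa using (tendsto_gridStep a b).const_add a
    · filter_upwards [hsmall] with M hM
      constructor <;> linarith [gridStep_pos (M := M) hab]
  simp only [sum_secondDiff_gridPoint]
  simpa using (hright.const_sub (f b)).sub (hleft.sub_const (f a))

lemma abs_sub_le_one_of_clamp_mem_Ioo {v : ℝ} (hv : v ∈ Icc (0 : ℝ) (M + 1))
    (h : max 1 (min (M : ℝ) v) ∈ Ioo (k : ℝ) (k + 2)) : |v - (k + 1)| ≤ 1 := by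
  obtain ⟨hlower, hupper⟩ := h
  simp only [lt_max_iff, lt_min_iff, max_lt_iff, min_lt_iff] at hlower hupper
  have hkv : (k : ℝ) ≤ v := by
    rcases hlower with hk | hk
    · have : k = 0 := Nat.lt_one_iff.mp (by exact_mod_cast hk)
      simpa [this] using hv.1
    · exact hk.2.le
  have hvk : v ≤ k + 2 := by
    rcases hupper.2 with hk | hk
    · have : (M : ℝ) ≤ k + 1 := by exact_mod_cast Nat.lt_succ_iff.mp (by exact_mod_cast hk)
      linarith [hv.2]
    · exact hk.le
  rw [abs_le]
  constructor <;> linarith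

-- A telescoping sum of shifted unit ramps. Clamping the variable to `[1, M]` makes the first and
-- last functions constant near the endpoints, so that no endpoint is needed as a center.
lemma exists_unitPartition (hM : 0 < M) :
    ∃ χ : ℕ → ℝ → ℝ, (∀ k, Continuous (χ k)) ∧ (∀ k v, 0 ≤ χ k v) ∧
      (∀ v, ∑ k ∈ Finset.range M, χ k v = 1) ∧
      ∀ k, ∀ v ∈ Icc (0 : ℝ) (M + 1), χ k v ≠ 0 → |v - (k + 1)| ≤ 1 := by
  have hM1 : (1 : ℝ) ≤ M := by exact_mod_cast hM
  let clamp : ℝ → ℝ := fun v => max 1 (min M v)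
  let ramp : ℕ → ℝ → ℝ := fun k v => max 0 (min 1 (clamp v - k))
  refine ⟨fun k v => ramp k v - ramp (k + 1) v, fun k => by fun_prop, fun k v => ?_, fun v => ?_,
    fun k v hv hne => ?_⟩
  · have : ramp (k + 1) v ≤ ramp k v := by
      simp only [ramp]
      gcongr
      lia
    exact sub_nonneg.mpr this
  · have hfirst : ramp 0 v = 1 := by simp [ramp, clamp]
    have hlast : ramp M v = 0 := by simp [ramp, clamp, hM1]
    rw [Finset.sum_range_sub' (ramp · v), hfirst, hlast, sub_zero]
  · have hlower : (k : ℝ) < clamp v := by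
      by_contra! hle
      apply hne
      simp only [ramp]
      push_cast
      rw [min_eq_right (by linarith), min_eq_right (by linarith), max_eq_left (by linarith),
        max_eq_left (by linarith), sub_self]
    have hupper : clamp v < k + 2 := by
      by_contra! hle
      apply hne
      simp only [ramp]
      push_cast
      rw [min_eq_left (by linarith), min_eq_left (by linarith), sub_self]
    exact abs_sub_le_one_of_clamp_mem_Ioo hv ⟨hlower, hupper⟩

lemma exists_gridPartition (hab : a < b) (hM : 0 < M) :
    ∃ χ : ℕ → ℝ → ℝ, (∀ k, Continuous (χ k)) ∧ (∀ k t, 0 ≤ χ k t) ∧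
      (∀ t, ∑ k ∈ Finset.range M, χ k t = 1) ∧
      ∀ k, ∀ t ∈ Icc a b, χ k t ≠ 0 → |t - gridPoint a b M (k + 1)| ≤ gridStep a b M := by
  have hδ := gridStep_pos (M := M) hab
  obtain ⟨χ, hχc, hχ0, hχ1, hχ⟩ := exists_unitPartition hM
  let coord : ℝ → ℝ := fun t => (t - a) / gridStep a b M
  refine ⟨fun k t => χ k (coord t), fun k => (hχc k).comp (by fun_prop), fun k t => hχ0 k _,
    fun t => hχ1 _, fun k t ht hne => ?_⟩
  have hcoord : coord t ∈ Icc (0 : ℝ) (M + 1) := by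
    refine ⟨div_nonneg (sub_nonneg.mpr ht.1) hδ.le, ?_⟩
    rw [div_le_iff₀ hδ, gridStep]
    field_simp
    linarith [ht.2]
  have hscale : t - gridPoint a b M (k + 1) = (coord t - (k + 1)) * gridStep a b M := by
    simp only [gridPoint, coord]
    push_cast
    field_simp
    ring
  rw [hscale, abs_mul, abs_of_pos hδ]
  exact mul_le_of_le_one_left hδ.le (hχ k _ hcoord hne)

lemma abs_sum_mul_sub_le {ι : Type*} {s : Finset ι} {χ y : ι → ℝ} {c η : ℝ}
    (hχ0 : ∀ i ∈ s, 0 ≤ χ i) (hχ1 : ∑ i ∈ s, χ i = 1)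
    (hy : ∀ i ∈ s, χ i ≠ 0 → |y i - c| ≤ η) : |∑ i ∈ s, y i * χ i - c| ≤ η := by
  calc |∑ i ∈ s, y i * χ i - c| = |∑ i ∈ s, (y i - c) * χ i| := by
        simp only [sub_mul, Finset.sum_sub_distrib, ← Finset.mul_sum, hχ1, mul_one]
    _ ≤ ∑ i ∈ s, |(y i - c) * χ i| := Finset.abs_sum_le_sum_abs _ _
    _ ≤ ∑ i ∈ s, η * χ i := Finset.sum_le_sum fun i hi => by
        rw [abs_mul, abs_of_nonneg (hχ0 i hi)]
        rcases eq_or_ne (χ i) 0 with h | h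
        · simp [h]
        · exact mul_le_mul_of_nonneg_right (hy i hi h) (hχ0 i hi)
    _ = η := by rw [← Finset.mul_sum, hχ1, mul_one]

lemma exists_partition_abs_sum_sub_le {R ε : ℝ} (hR : 0 < R) (hε : 0 < ε) :
    ∃ (M : ℕ) (χ : ℕ → ℝ → ℝ) (y : ℕ → ℝ), (∀ k, Continuous (χ k)) ∧ (∀ k t, 0 ≤ χ k t) ∧
      (∀ t, ∑ k ∈ Finset.range M, χ k t = 1) ∧
      (∀ t ∈ Icc (-R) R, |∑ k ∈ Finset.range M, y k * χ k t - t| ≤ ε) ∧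
      ∀ t ∈ Icc (-R) R, |∑ k ∈ Finset.range M, y k ^ 2 * χ k t - t ^ 2| ≤ ε := by
  have hRR : -R < R := by linarith
  obtain ⟨M, ⟨hδ, hδR⟩, hM⟩ : ∃ M,
      (gridStep (-R) R M ≤ ε ∧ gridStep (-R) R M ≤ ε / (2 * R)) ∧ 0 < M :=
    ((((tendsto_gridStep (-R) R).eventually_le_const hε).and
      ((tendsto_gridStep (-R) R).eventually_le_const (by positivity))).and
        (eventually_gt_atTop 0)).exists
  obtain ⟨χ, hχc, hχ0, hχ1, hχ⟩ := exists_gridPartition hRR hM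
  refine ⟨M, χ, fun k => gridPoint (-R) R M (k + 1), hχc, hχ0, hχ1, fun t ht => ?_, fun t ht => ?_⟩
  · refine abs_sum_mul_sub_le (fun k _ => hχ0 k t) (hχ1 t) fun k _ hk => ?_
    rw [abs_sub_comm]
    exact (hχ k t ht hk).trans hδ
  · refine abs_sum_mul_sub_le (fun k _ => hχ0 k t) (hχ1 t) fun k hkM hk => ?_
    have hy := gridPoint_mem_Icc hRR (Nat.succ_le_succ (Finset.mem_range.mp hkM).le)
    have hsum : |t + gridPoint (-R) R M (k + 1)| ≤ 2 * R := by
      rw [abs_le]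
      constructor <;> linarith [hy.1, hy.2, ht.1, ht.2]
    rw [abs_sub_comm, sq_sub_sq, abs_mul]
    calc _ ≤ 2 * R * (ε / (2 * R)) :=
          mul_le_mul hsum ((hχ k t ht hk).trans hδR) (abs_nonneg _) (by positivity)
      _ = ε := by field_simp

end UniformGrid

section OrderedCStarAlgebra

variable {A : Type*} [CStarAlgebra A]

lemma cfc_tangentGap {f : ℝ → ℝ} {T : A} (hT : IsSelfAdjoint T)
    (hf : ContinuousOn f (spectrum ℝ T)) (x s : ℝ) :
    cfc (tangentGap f x s) T = cfc f T - s • T - (f x - s * x) • 1 := by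
  have hfun : tangentGap f x s = fun t => f t - s * t - (f x - s * x) := by
    ext t
    unfold tangentGap
    ring
  rw [hfun, cfc_sub (fun t => f t - s * t) (fun _ => f x - s * x) T, cfc_sub f (s * ·) T,
    cfc_const_mul_id s T, cfc_const _ T, Algebra.algebraMap_eq_smul_one]

variable [PartialOrder A] [StarOrderedRing A]

lemma eq_zero_of_forall_nonneg_smul_add {x y : A} (h : ∀ r : ℝ, 0 ≤ r • x + y) : x = 0 := by
  have hlim : ∀ z : A, Tendsto (fun n : ℕ => z + ((n : ℝ) + 1)⁻¹ • y) atTop (𝓝 z) := fun z => by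
    have hinv : Tendsto (fun n : ℕ => ((n : ℝ) + 1)⁻¹) atTop (𝓝 0) := by
      simpa only [one_div] using tendsto_one_div_add_atTop_nhds_zero_nat (𝕜 := ℝ)
    simpa using (hinv.smul_const y).const_add z
  have hscaled : ∀ (n : ℕ) (r : ℝ), 0 ≤ ((n : ℝ) + 1)⁻¹ • (r • x + y) := fun n r =>
    smul_nonneg (by positivity) (h r)
  apply le_antisymm
  · rw [← neg_nonneg]
    refine ge_of_tendsto' (hlim (-x)) fun n => ?_
    have := hscaled n (-(n + 1))
    rwa [smul_add, smul_smul, mul_neg, inv_mul_cancel₀ (by positivity), neg_one_smul] at this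
  · refine ge_of_tendsto' (hlim x) fun n => ?_
    have := hscaled n (n + 1)
    rwa [smul_add, smul_smul, inv_mul_cancel₀ (by positivity), one_smul] at this

lemma star_sum_mul_sum_le {ι : Type*} {s : Finset ι} {β : ι → ℝ} (hβ : ∀ i ∈ s, 0 < β i)
    (x : ι → A) :
    star (∑ i ∈ s, x i) * ∑ i ∈ s, x i ≤
      (∑ i ∈ s, β i) • ∑ i ∈ s, (β i)⁻¹ • (star (x i) * x i) := by
  rcases s.eq_empty_or_nonempty with rfl | hs
  · simp
  have hsum : 0 < ∑ i ∈ s, β i := Finset.sum_pos hβ hs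
  set c := ∑ i ∈ s, β i
  set y := ∑ i ∈ s, x i with hy
  let d : ι → A := fun i => (β i)⁻¹ • x i - c⁻¹ • y
  have hexpand : ∀ i ∈ s, β i • (star (d i) * d i) =
      (β i)⁻¹ • (star (x i) * x i) - c⁻¹ • (star y * x i) - c⁻¹ • (star (x i) * y) +
        β i • ((c⁻¹ * c⁻¹) • (star y * y)) := fun i hi => by
    have := (hβ i hi).ne'
    simp only [d, star_sub, star_smul, star_trivial, sub_mul, mul_sub, smul_mul_smul_comm, smul_sub,
      smul_smul]
    rw [mul_inv_cancel_left₀ this, mul_left_comm, mul_inv_cancel₀ this, ← mul_assoc,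
      mul_inv_cancel₀ this, one_mul, mul_one]
    abel
  have hnonneg : 0 ≤ ∑ i ∈ s, β i • (star (d i) * d i) :=
    Finset.sum_nonneg fun i hi => smul_nonneg (hβ i hi).le (star_mul_self_nonneg _)
  rw [Finset.sum_congr rfl hexpand, Finset.sum_add_distrib, Finset.sum_sub_distrib,
    Finset.sum_sub_distrib, ← Finset.sum_smul, ← Finset.smul_sum (r := c⁻¹),
    ← Finset.smul_sum (r := c⁻¹), ← Finset.mul_sum, ← Finset.sum_mul, ← star_sum, ← hy, smul_smul,
    mul_inv_cancel_left₀ hsum.ne', sub_add_cancel, sub_nonneg] at hnonneg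
  simpa only [smul_smul, mul_inv_cancel₀ hsum.ne', one_smul] using
    smul_le_smul_of_nonneg_left hnonneg hsum.le

lemma conj_sum_le {ι : Type*} {s : Finset ι} {β : ι → ℝ} (hβ : ∀ i ∈ s, 0 < β i) {T : A}
    (hT : 0 ≤ T) {c : ι → A} (hc : ∀ i ∈ s, IsSelfAdjoint (c i))
    (hle : ∀ i ∈ s, c i * T * c i ≤ β i • (c i * c i)) :
    (∑ i ∈ s, c i) * T * ∑ i ∈ s, c i ≤ (∑ i ∈ s, β i) • ∑ i ∈ s, c i * c i := by
  obtain ⟨S, rfl⟩ := CStarAlgebra.nonneg_iff_eq_star_mul_self.mp hT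
  have hsum : IsSelfAdjoint (∑ i ∈ s, c i) := isSelfAdjoint_sum s hc
  calc (∑ i ∈ s, c i) * (star S * S) * ∑ i ∈ s, c i
      = star (∑ i ∈ s, S * c i) * ∑ i ∈ s, S * c i := by
        rw [← Finset.mul_sum, star_mul, hsum.star_eq]
        noncomm_ring
    _ ≤ (∑ i ∈ s, β i) • ∑ i ∈ s, (β i)⁻¹ • (star (S * c i) * (S * c i)) :=
        star_sum_mul_sum_le hβ _
    _ ≤ (∑ i ∈ s, β i) • ∑ i ∈ s, c i * c i := by
        refine smul_le_smul_of_nonneg_left (Finset.sum_le_sum fun i hi => ?_)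
          (Finset.sum_nonneg fun i hi => (hβ i hi).le)
        rw [inv_smul_le_iff_of_pos (hβ i hi), star_mul, (hc i hi).star_eq]
        simpa only [mul_assoc] using hle i hi

lemma sq_sum_smul_le_sum_sq_smul {ι : Type*} {s : Finset ι} {P : ι → A} (hP : ∀ i ∈ s, 0 ≤ P i)
    (hP1 : ∑ i ∈ s, P i = 1) (y : ι → ℝ) :
    (∑ i ∈ s, y i • P i) * ∑ i ∈ s, y i • P i ≤ ∑ i ∈ s, y i ^ 2 • P i := by
  set N := ∑ i ∈ s, y i • P i with hN
  have hNsa : IsSelfAdjoint N :=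
    isSelfAdjoint_sum s fun i hi => (IsSelfAdjoint.all _).smul (IsSelfAdjoint.of_nonneg (hP i hi))
  have hvar : ∑ i ∈ s, (y i • 1 - N) * P i * (y i • 1 - N) = ∑ i ∈ s, y i ^ 2 • P i - N * N := by
    have hterm : ∀ i, (y i • 1 - N) * P i * (y i • 1 - N) =
        y i ^ 2 • P i - N * (y i • P i) - y i • P i * N + N * P i * N := fun i => by
      simp only [sub_mul, mul_sub, smul_mul_assoc, mul_smul_comm, one_mul, mul_one, smul_sub,
        smul_smul, sq]
      abel
    simp only [hterm, Finset.sum_add_distrib, Finset.sum_sub_distrib, ← Finset.mul_sum,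
      ← Finset.sum_mul, hP1, ← hN, mul_one]
    abel
  rw [← sub_nonneg, ← hvar]
  exact Finset.sum_nonneg fun i hi =>
    (((IsSelfAdjoint.all _).smul (.one A)).sub hNsa).conjugate_nonneg (hP i hi)

lemma sub_smul_one_mul_self_le {T : A} (hT : IsSelfAdjoint T) (x c : ℝ) :
    (T - x • 1) * (T - x • 1) ≤ cfc (fun t => max 0 ((t - x) ^ 2 - c)) T + c • 1 := by
  have hsub : T - x • 1 = cfc (fun t => t - x) T := by
    rw [cfc_sub .., cfc_id' ℝ T, cfc_const x T, Algebra.algebraMap_eq_smul_one]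
  rw [hsub, ← cfc_mul .., ← Algebra.algebraMap_eq_smul_one, ← cfc_add_const ..]
  refine cfc_mono fun t _ => ?_
  linarith [le_max_right 0 ((t - x) ^ 2 - c)]

lemma conj_cfc_le {K : A} {u h : ℝ → ℝ} {c : ℝ} (hu : ContinuousOn u (spectrum ℝ K))
    (hh : ContinuousOn h (spectrum ℝ K)) (hle : ∀ t ∈ spectrum ℝ K, u t ≠ 0 → h t ≤ c) :
    cfc u K * cfc h K * cfc u K ≤ c • (cfc u K * cfc u K) := by
  rw [← cfc_mul u h K, ← cfc_mul _ u K, ← cfc_mul u u K, ← cfc_const_mul c _ K]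
  refine cfc_mono fun t ht => ?_
  rcases eq_or_ne (u t) 0 with hut | hut
  · simp [hut]
  · nlinarith [hle t ht hut, mul_self_nonneg (u t)]

lemma sum_cfc_mul_self_le {ι : Type*} {s : Finset ι} {K : A} {u : ι → ℝ → ℝ}
    (hu : ∀ i ∈ s, ContinuousOn (u i) (spectrum ℝ K))
    (hu0 : ∀ i ∈ s, ∀ t ∈ spectrum ℝ K, 0 ≤ u i t) :
    ∑ i ∈ s, cfc (u i) K * cfc (u i) K ≤ (∑ i ∈ s, cfc (u i) K) * ∑ i ∈ s, cfc (u i) K := by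
  have hsq : ∀ i ∈ s, ContinuousOn (fun t => u i t * u i t) (spectrum ℝ K) := fun i hi =>
    (hu i hi).mul (hu i hi)
  have hsum : ContinuousOn (∑ i ∈ s, u i) (spectrum ℝ K) := by
    simpa only [Finset.sum_fn] using continuousOn_finsetSum s hu
  have hsum_sq : ContinuousOn (∑ i ∈ s, fun t => u i t * u i t) (spectrum ℝ K) := by
    simpa only [Finset.sum_fn] using continuousOn_finsetSum s hsq
  rw [Finset.sum_congr rfl fun i hi => (cfc_mul (u i) (u i) K (hu i hi) (hu i hi)).symm,
    ← cfc_sum (fun i t => u i t * u i t) K s hsq, ← cfc_sum u K s hu, ← cfc_mul _ _ K hsum hsum]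
  refine cfc_mono (fun t ht => ?_) hsum_sq (hsum.mul hsum)
  simpa only [Finset.sum_apply, ← sq] using
    Finset.sum_sq_le_sq_sum_of_nonneg fun i hi => hu0 i hi t ht

lemma conj_cfc_le_of_grid {a b : ℝ} (hab : a < b) {M : ℕ} (hM : 0 < M) {K T : A}
    (hK : spectrum ℝ K ⊆ Icc a b) (hT : 0 ≤ T) {w : ℝ → ℝ} (hw : ContinuousOn w (Icc a b))
    (hw0 : ∀ t ∈ Icc a b, 0 ≤ w t) {β : ℕ → ℝ} (hβ : ∀ k < M, 0 < β k)
    (hle : ∀ k < M, ∀ u : ℝ → ℝ, ContinuousOn u (Icc a b) → (∀ t ∈ Icc a b, 0 ≤ u t) →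
      (∀ t ∈ Icc a b, u t ≠ 0 → w t ≠ 0 ∧ |t - gridPoint a b M (k + 1)| ≤ gridStep a b M) →
        cfc u K * T * cfc u K ≤ β k • (cfc u K * cfc u K)) :
    cfc w K * T * cfc w K ≤ (∑ k ∈ Finset.range M, β k) • (cfc w K * cfc w K) := by
  obtain ⟨χ, hχc, hχ0, hχ1, hχ⟩ := exists_gridPartition hab hM
  let u : ℕ → ℝ → ℝ := fun k t => χ k t * w t
  have hu : ∀ k, ContinuousOn (u k) (Icc a b) := fun k => (hχc k).continuousOn.mul hw
  have hu0 : ∀ k, ∀ t ∈ Icc a b, 0 ≤ u k t := fun k t ht => mul_nonneg (hχ0 k t) (hw0 t ht)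
  have hwK : cfc w K = ∑ k ∈ Finset.range M, cfc (u k) K := by
    rw [← cfc_sum u K _ fun k _ => (hu k).mono hK]
    congr 1
    ext t
    rw [Finset.sum_apply, ← Finset.sum_mul, hχ1, one_mul]
  have hβ' : ∀ k ∈ Finset.range M, 0 < β k := fun k hk => hβ k (Finset.mem_range.mp hk)
  have hlocal : ∀ k ∈ Finset.range M,
      cfc (u k) K * T * cfc (u k) K ≤ β k • (cfc (u k) K * cfc (u k) K) := fun k hk =>
    hle k (Finset.mem_range.mp hk) (u k) (hu k) (hu0 k) fun t ht hut =>
      ⟨right_ne_zero_of_mul hut, hχ k t ht (left_ne_zero_of_mul hut)⟩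
  rw [hwK]
  exact (conj_sum_le hβ' hT (fun k _ => cfc_predicate _ _) hlocal).trans <|
    smul_le_smul_of_nonneg_left
      (sum_cfc_mul_self_le (fun k _ => (hu k).mono hK) fun k _ t ht => hu0 k t (hK ht))
      (Finset.sum_nonneg fun k hk => (hβ' k hk).le)

end OrderedCStarAlgebra

section PositiveMaps

variable {A B : Type*} [CStarAlgebra A] [PartialOrder A] [StarOrderedRing A] [CStarAlgebra B]
  [PartialOrder B] [StarOrderedRing B] {φ : A →ₚ[ℂ] B} {H : A} {f : ℝ → ℝ} {a b : ℝ}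

lemma spectrum_map_subset_Icc (hφ : φ 1 = 1) (hH : IsSelfAdjoint H)
    (hspec : spectrum ℝ H ⊆ Icc a b) : spectrum ℝ (φ H) ⊆ Icc a b := by
  have hφH : IsSelfAdjoint (φ H) := hH.map' φ
  have hscalar : ∀ r : ℝ, φ (algebraMap ℝ A r) = algebraMap ℝ B r := fun r => by
    simp only [Algebra.algebraMap_eq_smul_one, φ.map_smul_of_tower, hφ]
  have hlower : algebraMap ℝ B a ≤ φ H := by
    rw [← hscalar]
    exact OrderHomClass.mono φ ((algebraMap_le_iff_le_spectrum hH).mpr fun t ht => (hspec ht).1)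
  have hupper : φ H ≤ algebraMap ℝ B b := by
    rw [← hscalar]
    exact OrderHomClass.mono φ ((le_algebraMap_iff_spectrum_le hH).mpr fun t ht => (hspec ht).2)
  exact fun t ht => ⟨(algebraMap_le_iff_le_spectrum hφH).mp hlower t ht,
    (le_algebraMap_iff_spectrum_le hφH).mp hupper t ht⟩

lemma sq_map_cfc_sum_le {ι : Type*} {s : Finset ι} (hφ : φ 1 = 1) {x : A} (hx : IsSelfAdjoint x)
    {χ : ι → ℝ → ℝ} (hχ : ∀ i ∈ s, ContinuousOn (χ i) (spectrum ℝ x))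
    (hχ0 : ∀ i ∈ s, ∀ t ∈ spectrum ℝ x, 0 ≤ χ i t) (hχ1 : ∀ t ∈ spectrum ℝ x, ∑ i ∈ s, χ i t = 1)
    (y : ι → ℝ) :
    φ (cfc (fun t => ∑ i ∈ s, y i * χ i t) x) * φ (cfc (fun t => ∑ i ∈ s, y i * χ i t) x) ≤
      φ (cfc (fun t => ∑ i ∈ s, y i ^ 2 * χ i t) x) := by
  have hmap : ∀ z : ι → ℝ, φ (cfc (fun t => ∑ i ∈ s, z i * χ i t) x) =
      ∑ i ∈ s, z i • φ (cfc (χ i) x) := fun z => by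
    have hfun : (fun t => ∑ i ∈ s, z i * χ i t) = ∑ i ∈ s, fun t => z i * χ i t := by
      ext t
      simp only [Finset.sum_apply]
    rw [hfun, cfc_sum (fun i t => z i * χ i t) x s fun i hi => continuousOn_const.mul (hχ i hi),
      map_sum]
    refine Finset.sum_congr rfl fun i hi => ?_
    rw [cfc_const_mul (z i) (χ i) x (hχ i hi), φ.map_smul_of_tower]
  rw [hmap y, hmap fun i => y i ^ 2]
  refine sq_sum_smul_le_sum_sq_smul (fun i hi => φ.map_nonneg (cfc_nonneg (hχ0 i hi))) ?_ y
  have hone := hmap 1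
  simp only [Pi.one_apply, one_mul, one_smul] at hone
  rw [← hone, cfc_congr (g := fun _ => (1 : ℝ)) hχ1, cfc_const_one ℝ x, hφ]

lemma exists_norm_sub_le_sq_map_le (hφ : φ 1 = 1) {x : A} (hx : IsSelfAdjoint x) {ε : ℝ}
    (hε : 0 < ε) : ∃ z, ‖z - x‖ ≤ ε ∧ φ z * φ z ≤ φ (x * x) + ε • 1 := by
  have hR : 0 < ‖x‖ * ‖(1 : A)‖ + 1 := by positivity
  have hspec : ∀ t ∈ spectrum ℝ x, t ∈ Icc (-(‖x‖ * ‖(1 : A)‖ + 1)) (‖x‖ * ‖(1 : A)‖ + 1) :=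
    fun t ht => abs_le.mp ((spectrum.norm_le_norm_mul_of_mem ht).trans (lt_add_one _).le)
  obtain ⟨M, χ, y, hχc, hχ0, hχ1, hmean, hmean_sq⟩ := exists_partition_abs_sum_sub_le hR hε
  have hsum : ∀ z : ℕ → ℝ, Continuous fun t => ∑ k ∈ Finset.range M, z k * χ k t := fun z => by
    fun_prop
  refine ⟨cfc (fun t => ∑ k ∈ Finset.range M, y k * χ k t) x, ?_, ?_⟩
  · nth_rw 2 [← cfc_id' ℝ x]
    rw [← cfc_sub _ _ x (hsum y).continuousOn]
    exact norm_cfc_le hε.le fun t ht => hmean t (hspec t ht)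
  · have hcfc : cfc (fun t => ∑ k ∈ Finset.range M, y k ^ 2 * χ k t) x ≤ x * x + ε • 1 := by
      rw [← Algebra.algebraMap_eq_smul_one, ← cfc_const ε x, ← sq, ← cfc_pow_id (R := ℝ) x 2,
        ← cfc_add ..]
      refine cfc_mono (fun t ht => ?_) (hsum _).continuousOn
      linarith [(abs_le.mp (hmean_sq t (hspec t ht))).2]
    calc _ ≤ φ (cfc (fun t => ∑ k ∈ Finset.range M, y k ^ 2 * χ k t) x) :=
          sq_map_cfc_sum_le hφ hx (fun k _ => (hχc k).continuousOn) (fun k _ t _ => hχ0 k t)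
            (fun t _ => hχ1 t) y
      _ ≤ φ (x * x + ε • 1) := OrderHomClass.mono φ hcfc
      _ = φ (x * x) + ε • 1 := by rw [map_add, φ.map_smul_of_tower, hφ]

lemma map_mul_map_le_map_mul_self (hφ : φ 1 = 1) {x : A} (hx : IsSelfAdjoint x) :
    φ x * φ x ≤ φ (x * x) := by
  have hpos : ∀ n : ℕ, 0 < 1 / ((n : ℝ) + 1) := fun n => by positivity
  choose z hz hzφ using fun n => exists_norm_sub_le_sq_map_le hφ hx (hpos n)
  have hε := tendsto_one_div_add_atTop_nhds_zero_nat (𝕜 := ℝ)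
  have hzx : Tendsto z atTop (𝓝 x) :=
    tendsto_iff_norm_sub_tendsto_zero.mpr (squeeze_zero (fun n => norm_nonneg _) hz hε)
  have hφz : Tendsto (fun n => φ (z n)) atTop (𝓝 (φ x)) := ((map_continuous φ).tendsto x).comp hzx
  refine le_of_tendsto_of_tendsto' (hφz.mul hφz) ?_ hzφ
  simpa using (hε.smul_const (1 : B)).const_add (φ (x * x))

lemma map_mul_add_mul_of_map_mul_self (hφ : φ 1 = 1) {x y : A} (hx : IsSelfAdjoint x)
    (hy : IsSelfAdjoint y) (hxx : φ (x * x) = φ x * φ x) :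
    φ (x * y + y * x) = φ x * φ y + φ y * φ x := by
  rw [← sub_eq_zero]
  refine eq_zero_of_forall_nonneg_smul_add (y := φ (y * y) - φ y * φ y) fun r => ?_
  have hschwarz := map_mul_map_le_map_mul_self hφ (((IsSelfAdjoint.all r).smul hx).add hy)
  rw [← sub_nonneg] at hschwarz
  convert hschwarz using 1
  simp only [add_mul, mul_add, map_add, φ.map_smul_of_tower, smul_mul_assoc, mul_smul_comm, hxx,
    smul_sub, smul_add]
  abel

lemma map_pow_of_map_mul_self (hφ : φ 1 = 1) {x : A} (hx : IsSelfAdjoint x)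
    (hxx : φ (x * x) = φ x * φ x) (n : ℕ) : φ (x ^ n) = φ x ^ n := by
  induction n with
  | zero => simpa only [pow_zero] using hφ
  | succ n ih =>
    have hjordan := map_mul_add_mul_of_map_mul_self hφ hx (hx.pow n) hxx
    rw [ih, ← pow_succ, ← pow_succ', ← pow_succ, ← pow_succ', map_add, ← two_smul ℝ, ← two_smul ℝ]
      at hjordan
    exact smul_right_injective B (two_ne_zero' ℝ) hjordan

lemma map_aeval_of_map_mul_self (hφ : φ 1 = 1) {x : A} (hx : IsSelfAdjoint x)
    (hxx : φ (x * x) = φ x * φ x) (p : ℂ[X]) : φ (aeval x p) = aeval (φ x) p := by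
  simp only [aeval_eq_sum_range, map_sum, map_smul, map_pow_of_map_mul_self hφ hx hxx]

lemma map_cfc_tangentGap (hφ : φ 1 = 1) (hH : IsSelfAdjoint H) (hspec : spectrum ℝ H ⊆ Icc a b)
    (hfc : ContinuousOn f (Icc a b)) (hcomm : φ (cfc f H) = cfc f (φ H)) (x s : ℝ) :
    φ (cfc (tangentGap f x s) H) = cfc (tangentGap f x s) (φ H) := by
  rw [cfc_tangentGap hH (hfc.mono hspec), map_sub, map_sub, φ.map_smul_of_tower,
    φ.map_smul_of_tower, hφ, hcomm,
    cfc_tangentGap (hH.map' φ) (hfc.mono (spectrum_map_subset_Icc hφ hH hspec))]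

end PositiveMaps

section Locality

variable {A B : Type*} [CStarAlgebra A] [PartialOrder A] [StarOrderedRing A] [CStarAlgebra B]
  [PartialOrder B] [StarOrderedRing B] {φ : A →ₚ[ℂ] B} {H : A} {f g u w : ℝ → ℝ}
  {a b r δ κ : ℝ}

lemma conj_map_cfc_le_secondDiff (hφ : φ 1 = 1) (hH : IsSelfAdjoint H)
    (hspec : spectrum ℝ H ⊆ Icc a b) (hf : ConvexOn ℝ (Icc a b) f)
    (hfc : ContinuousOn f (Icc a b)) (hcomm : φ (cfc f H) = cfc f (φ H)) {x s : ℝ}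
    (hl : x - δ ∈ Icc a b) (hr : x + δ ∈ Icc a b) (hs : ∀ t ∈ Icc a b, 0 ≤ tangentGap f x s t)
    (hκ : 0 ≤ κ) (hg : ContinuousOn g (Icc a b))
    (hgle : ∀ t ∈ Icc a b, g t ≤ κ * tangentGap f x s t) (hu : ContinuousOn u (Icc a b))
    (hux : ∀ t ∈ Icc a b, u t ≠ 0 → |t - x| ≤ δ) :
    cfc u (φ H) * φ (cfc g H) * cfc u (φ H) ≤
      (κ * secondDiff f δ x) • (cfc u (φ H) * cfc u (φ H)) := by
  have hspec' := spectrum_map_subset_Icc hφ hH hspec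
  have hgap : ContinuousOn (tangentGap f x s) (Icc a b) := continuousOn_tangentGap hfc x s
  have hφg : φ (cfc g H) ≤ κ • cfc (tangentGap f x s) (φ H) := by
    rw [← map_cfc_tangentGap hφ hH hspec hfc hcomm, ← φ.map_smul_of_tower,
      ← cfc_const_mul κ _ H (hgap.mono hspec)]
    exact OrderHomClass.mono φ (cfc_mono (fun t ht => hgle t (hspec ht)) (hg.mono hspec)
      (continuousOn_const.mul (hgap.mono hspec)))
  calc cfc u (φ H) * φ (cfc g H) * cfc u (φ H)
      ≤ cfc u (φ H) * (κ • cfc (tangentGap f x s) (φ H)) * cfc u (φ H) :=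
        (cfc_predicate u (φ H)).conjugate_le_conjugate hφg
    _ = κ • (cfc u (φ H) * cfc (tangentGap f x s) (φ H) * cfc u (φ H)) := by
        rw [mul_smul_comm, smul_mul_assoc]
    _ ≤ κ • (secondDiff f δ x • (cfc u (φ H) * cfc u (φ H))) := by
        refine smul_le_smul_of_nonneg_left ?_ hκ
        exact conj_cfc_le (hu.mono hspec') (hgap.mono hspec') fun t ht hut =>
          tangentGap_le_secondDiff hf hl hr hs (hux t (hspec' ht) hut)
    _ = (κ * secondDiff f δ x) • (cfc u (φ H) * cfc u (φ H)) := smul_smul ..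

lemma conj_map_cfc_le_sum_secondDiff (hab : a < b) (hφ : φ 1 = 1) (hH : IsSelfAdjoint H)
    (hspec : spectrum ℝ H ⊆ Icc a b) (hf : StrictConvexOn ℝ (Icc a b) f)
    (hfc : ContinuousOn f (Icc a b)) (hcomm : φ (cfc f H) = cfc f (φ H))
    (hw : ContinuousOn w (Icc a b)) (hw0 : ∀ t ∈ Icc a b, 0 ≤ w t) (hg : ContinuousOn g (Icc a b))
    (hg0 : ∀ t ∈ Icc a b, 0 ≤ g t)
    (hsep : ∀ t ∈ Icc a b, ∀ t' ∈ Icc a b, w t ≠ 0 → g t' ≠ 0 → r ≤ |t' - t|) (hκ : 0 < κ)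
    (hgκ : ∀ x ∈ Icc a b, ∀ s, (∀ t ∈ Icc a b, 0 ≤ tangentGap f x s t) →
      (∀ t ∈ Icc a b, g t ≠ 0 → r / 2 ≤ |t - x|) → ∀ t ∈ Icc a b, g t ≤ κ * tangentGap f x s t)
    {M : ℕ} (hM : 0 < M) (hδ : gridStep a b M ≤ r / 2) :
    cfc w (φ H) * φ (cfc g H) * cfc w (φ H) ≤
      (κ * ∑ k ∈ Finset.range M, secondDiff f (gridStep a b M) (gridPoint a b M (k + 1))) •
        (cfc w (φ H) * cfc w (φ H)) := by
  have hspec' := spectrum_map_subset_Icc hφ hH hspec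
  rw [Finset.mul_sum]
  refine conj_cfc_le_of_grid hab hM hspec'
    (φ.map_nonneg (cfc_nonneg fun t ht => hg0 t (hspec ht))) hw hw0
    (fun k hk => mul_pos hκ (secondDiff_pos hf (gridPoint_succ_sub_mem_Icc hab hk)
      (gridPoint_succ_add_mem_Icc hab hk) (gridStep_pos hab))) fun k hk u hu _ hux => ?_
  by_cases hu0 : ∀ t ∈ Icc a b, u t = 0
  · have hzero : cfc u (φ H) = 0 := by
      rw [cfc_congr (g := fun _ => (0 : ℝ)) fun t ht => hu0 t (hspec' ht), cfc_const_zero ℝ (φ H)]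
    simp [hzero]
  push Not at hu0
  obtain ⟨t, ht, hut⟩ := hu0
  obtain ⟨hwt, htx⟩ := hux t ht hut
  have hx := gridPoint_succ_mem_Ioo hab hk
  obtain ⟨s, hs⟩ := exists_forall_tangentGap_nonneg hf.convexOn (by rwa [interior_Icc])
  have hfar : ∀ t' ∈ Icc a b, g t' ≠ 0 → r / 2 ≤ |t' - gridPoint a b M (k + 1)| :=
    fun t' ht' hgt' => by
      linarith [hsep t ht t' ht' hwt hgt', abs_sub_le t' (gridPoint a b M (k + 1)) t,
        abs_sub_comm t (gridPoint a b M (k + 1))]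
  exact conj_map_cfc_le_secondDiff hφ hH hspec hf.convexOn hfc hcomm
    (gridPoint_succ_sub_mem_Icc hab hk) (gridPoint_succ_add_mem_Icc hab hk) hs hκ.le hg
    (hgκ _ (Ioo_subset_Icc_self hx) s hs hfar) hu fun t ht hut => (hux t ht hut).2

lemma conj_map_cfc_eq_zero (hab : a < b) (hφ : φ 1 = 1) (hH : IsSelfAdjoint H)
    (hspec : spectrum ℝ H ⊆ Icc a b) (hf : StrictConvexOn ℝ (Icc a b) f)
    (hfc : ContinuousOn f (Icc a b)) (hcomm : φ (cfc f H) = cfc f (φ H))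
    (hw : ContinuousOn w (Icc a b)) (hw0 : ∀ t ∈ Icc a b, 0 ≤ w t) (hg : ContinuousOn g (Icc a b))
    (hg0 : ∀ t ∈ Icc a b, 0 ≤ g t) (hr : 0 < r)
    (hsep : ∀ t ∈ Icc a b, ∀ t' ∈ Icc a b, w t ≠ 0 → g t' ≠ 0 → r ≤ |t' - t|) :
    cfc w (φ H) * φ (cfc g H) * cfc w (φ H) = 0 := by
  obtain ⟨κ, hκ, hgκ⟩ := exists_pos_le_mul_tangentGap hf isCompact_Icc hfc hg (half_pos hr)
  have hlim : Tendsto (fun M => (κ * ∑ k ∈ Finset.range M,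
      secondDiff f (gridStep a b M) (gridPoint a b M (k + 1))) • (cfc w (φ H) * cfc w (φ H)))
      atTop (𝓝 0) := by
    simpa using ((tendsto_sum_secondDiff hab hfc).const_mul κ).smul_const
      (cfc w (φ H) * cfc w (φ H))
  apply le_antisymm
  · refine ge_of_tendsto hlim ?_
    filter_upwards [eventually_gt_atTop 0,
      (tendsto_gridStep a b).eventually_le_const (half_pos hr)] with M hM hδ
    exact conj_map_cfc_le_sum_secondDiff hab hφ hH hspec hf hfc hcomm hw hw0 hg hg0
      hsep hκ hgκ hM hδ
  · exact (cfc_predicate w (φ H)).conjugate_nonneg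
      (φ.map_nonneg (cfc_nonneg fun t ht => hg0 t (hspec ht)))

lemma conj_map_mul_self_sub_le (hab : a < b) (hφ : φ 1 = 1) (hH : IsSelfAdjoint H)
    (hspec : spectrum ℝ H ⊆ Icc a b) (hf : StrictConvexOn ℝ (Icc a b) f)
    (hfc : ContinuousOn f (Icc a b)) (hcomm : φ (cfc f H) = cfc f (φ H)) {x : ℝ} (hδ : 0 < δ)
    (hu : ContinuousOn u (Icc a b)) (hu0 : ∀ t ∈ Icc a b, 0 ≤ u t)
    (hux : ∀ t ∈ Icc a b, u t ≠ 0 → |t - x| ≤ δ) :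
    cfc u (φ H) * (φ (H * H) - φ H * φ H) * cfc u (φ H) ≤
      (4 * δ ^ 2) • (cfc u (φ H) * cfc u (φ H)) := by
  let g : ℝ → ℝ := fun t => max 0 ((t - x) ^ 2 - 4 * δ ^ 2)
  have hg : Continuous g := by fun_prop
  have hfar : cfc u (φ H) * φ (cfc g H) * cfc u (φ H) = 0 := by
    refine conj_map_cfc_eq_zero hab hφ hH hspec hf hfc hcomm hu hu0 hg.continuousOn
      (fun t _ => le_max_left _ _) hδ fun t ht t' _ hut hgt' => ?_
    have hlt : (2 * δ) ^ 2 < (t' - x) ^ 2 := by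
      by_contra! hle
      exact hgt' (max_eq_left (by linarith))
    have := sq_lt_sq.mp hlt
    rw [abs_of_pos (by positivity)] at this
    linarith [hux t ht hut, abs_sub_le t' t x]
  have hvar : φ (H * H) - φ H * φ H ≤ φ (cfc g H) + (4 * δ ^ 2) • 1 :=
    calc φ (H * H) - φ H * φ H
        = φ ((H - x • 1) * (H - x • 1)) - (φ H - x • 1) * (φ H - x • 1) := by
          simp only [sub_mul, mul_sub, smul_mul_assoc, mul_smul_comm, one_mul, mul_one, map_sub,
            φ.map_smul_of_tower, hφ]
          abel
      _ ≤ φ ((H - x • 1) * (H - x • 1)) :=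
          sub_le_self _ ((hH.map' φ).sub ((IsSelfAdjoint.all x).smul (.one B))).mul_self_nonneg
      _ ≤ φ (cfc g H + (4 * δ ^ 2) • 1) := OrderHomClass.mono φ (sub_smul_one_mul_self_le hH _ _)
      _ = φ (cfc g H) + (4 * δ ^ 2) • 1 := by rw [map_add, φ.map_smul_of_tower, hφ]
  refine ((cfc_predicate u (φ H)).conjugate_le_conjugate hvar).trans_eq ?_
  rw [mul_add, add_mul, hfar, zero_add, mul_smul_comm, smul_mul_assoc, mul_one]

lemma map_mul_self_of_map_cfc_eq (hab : a < b) (hφ : φ 1 = 1) (hH : IsSelfAdjoint H)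
    (hspec : spectrum ℝ H ⊆ Icc a b) (hf : StrictConvexOn ℝ (Icc a b) f)
    (hfc : ContinuousOn f (Icc a b)) (hcomm : φ (cfc f H) = cfc f (φ H)) :
    φ (H * H) = φ H * φ H := by
  have hD := sub_nonneg.mpr (map_mul_map_le_map_mul_self hφ hH)
  have hle : ∀ M, 0 < M → φ (H * H) - φ H * φ H ≤ (4 * (b - a) * gridStep a b M) • 1 :=
    fun M hM => by
    have hδ := gridStep_pos (M := M) hab
    have hgrid := conj_cfc_le_of_grid (w := fun _ => 1) (β := fun _ => 4 * gridStep a b M ^ 2) hab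
      hM (spectrum_map_subset_Icc hφ hH hspec) hD continuousOn_const (fun _ _ => zero_le_one)
      (fun k _ => by positivity) fun k _ u hu hu0 hux =>
        conj_map_mul_self_sub_le hab hφ hH hspec hf hfc hcomm hδ hu hu0
          fun t ht hut => (hux t ht hut).2
    rw [cfc_const_one ℝ (φ H) (hH.map' φ), one_mul, mul_one, mul_one, Finset.sum_const,
      Finset.card_range, nsmul_eq_mul] at hgrid
    refine hgrid.trans (smul_le_smul_of_nonneg_right ?_ zero_le_one)
    have hMδ : M * gridStep a b M ≤ b - a := by
      have := gridPoint_last (a := a) (b := b) (M := M)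
      unfold gridPoint at this
      push_cast at this
      linarith
    calc (M : ℝ) * (4 * gridStep a b M ^ 2) = 4 * (M * gridStep a b M) * gridStep a b M := by ring
      _ ≤ 4 * (b - a) * gridStep a b M := by gcongr
  have hlim : Tendsto (fun M => (4 * (b - a) * gridStep a b M) • (1 : B)) atTop (𝓝 0) := by
    simpa using ((tendsto_gridStep a b).const_mul (4 * (b - a))).smul_const (1 : B)
  exact sub_eq_zero.mp <| le_antisymm
    (ge_of_tendsto hlim ((eventually_gt_atTop 0).mono hle)) hD

end Locality

lemma map_nonneg_of_map_conjTranspose_mul_self {A B : Type*} [CStarAlgebra A] [PartialOrder A]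
    [StarOrderedRing A] [CStarAlgebra B] [PartialOrder B] [StarOrderedRing B] (φ : A →ₗ[ℂ] B)
    {n : ℕ} (i : Fin n)
    (hφ : ∀ M : Matrix (Fin n) (Fin n) A, (∃ N, M = Nᴴ * N) → ∃ N, M.map φ = Nᴴ * N)
    {x : A} (hx : 0 ≤ x) : 0 ≤ φ x := by
  obtain ⟨y, rfl⟩ := CStarAlgebra.nonneg_iff_eq_star_mul_self.mp hx
  obtain ⟨N, hN⟩ := hφ _ ⟨Matrix.single i i y, rfl⟩
  have hentry : φ (star y * y) = ∑ k, star (N k i) * N k i := by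
    have := congrFun (congrFun hN i) i
    simpa [Matrix.mul_apply, Matrix.conjTranspose_apply] using this
  rw [hentry]
  exact Finset.sum_nonneg fun k _ => star_mul_self_nonneg _

theorem stmt_9_general {A B : Type*} [CStarAlgebra A] [PartialOrder A] [StarOrderedRing A]
    [CStarAlgebra B] [PartialOrder B] [StarOrderedRing B] (a b : ℝ) (f : ℝ → ℝ)
    (hf : StrictConvexOn ℝ (Icc a b) f) (hfc : ContinuousOn f (Icc a b)) (φ : A →ₚ[ℂ] B)
    (hφ1 : φ 1 = 1) (H : A) (hH : IsSelfAdjoint H) (hspec : spectrum ℝ H ⊆ Icc a b)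
    (hcomm : φ (cfc f H) = cfc f (φ H)) :
    ∀ p q : ℂ[X], φ (aeval H p * aeval H q) = φ (aeval H p) * φ (aeval H q) := by
  have hHH : φ (H * H) = φ H * φ H := by
    rcases lt_or_ge a b with hab | hba
    · exact map_mul_self_of_map_cfc_eq hab hφ1 hH hspec hf hfc hcomm
    · have hscalar : H = algebraMap ℝ A a :=
        CFC.eq_algebraMap_of_spectrum_subset_singleton H a
          fun t ht => le_antisymm ((hspec ht).2.trans hba) (hspec ht).1
      simp [hscalar, Algebra.algebraMap_eq_smul_one, φ.map_smul_of_tower, hφ1]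
  have haeval : ∀ p : ℂ[X], φ (aeval H p) = aeval (φ H) p :=
    map_aeval_of_map_mul_self hφ1 hH hHH
  intro p q
  rw [← map_mul, haeval, haeval, haeval, map_mul]

/-- **Corollary 2.8 (Arveson's conjecture).** Let `f` be a strictly convex continuous
function on `[a,b]`, `φ : B(𝓗) → B(𝓚)` a unital completely positive linear map, and
`H` a self-adjoint bounded operator with `σ(H) ⊆ [a,b]`.  If `φ(f(H)) = f(φ(H))`, then
the restriction of `φ` to the algebra of polynomials in `H` is multiplicative.
(Complete positivity is expressed as: for every `n`, `φ` applied entrywise maps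
positive `n × n` matrices over `B(𝓗)` to positive matrices over `B(𝓚)`, positivity of
a matrix `A` over a C*-algebra meaning `A = Bᴴ B` for some `B`.) -/
theorem stmt_9 {𝓗 𝓚 : Type*} [NormedAddCommGroup 𝓗] [InnerProductSpace ℂ 𝓗]
    [CompleteSpace 𝓗] [NormedAddCommGroup 𝓚] [InnerProductSpace ℂ 𝓚] [CompleteSpace 𝓚]
    (a b : ℝ) (hab : a ≤ b)
    (f : ℝ → ℝ) (hf : StrictConvexOn ℝ (Set.Icc a b) f)
    (hfc : ContinuousOn f (Set.Icc a b))
    (φ : (𝓗 →L[ℂ] 𝓗) →ₗ[ℂ] (𝓚 →L[ℂ] 𝓚))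
    (hφ1 : φ 1 = 1)
    (hφcp : ∀ (n : ℕ) (A : Matrix (Fin n) (Fin n) (𝓗 →L[ℂ] 𝓗)),
      (∃ B, A = Bᴴ * B) → ∃ C, A.map (fun x => φ x) = Cᴴ * C)
    (H : 𝓗 →L[ℂ] 𝓗) (hH : IsSelfAdjoint H) (hspec : spectrum ℝ H ⊆ Set.Icc a b)
    (hcomm : φ (cfc f H) = cfc f (φ H)) :
    ∀ p q : Polynomial ℂ, φ (aeval H p * aeval H q) = φ (aeval H p) * φ (aeval H q) :=
  stmt_9_general a b f hf hfc
    (.mk₀ φ fun _ => map_nonneg_of_map_conjTranspose_mul_self φ 0 (hφcp 1)) hφ1 H hH hspec hcomm
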